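/- Let X be a nonempty compact metric space. The set I(X) of idempotent probabilities on X, regarded as a subset of the product space ℝ^{C(X,ℝ)} (all functionals C(X,ℝ) → ℝ with the topology of pointwise convergence), is compact. -/

import Mathlib

def IsIdempotentProb {X : Type*} [TopologicalSpace X] (μ : C(X, ℝ) → ℝ) : Prop :=
  (∀ (c : ℝ) (f : C(X, ℝ)), μ (ContinuousMap.const X c + f) = c + μ f) ∧
  (∀ f g : C(X, ℝ), μ (f ⊔ g) = max (μ f) (μ g)) ∧
  μ 0 = 0

/-!
Preserving maxima makes an idempotent probability monotone, and it fixes constants; comparing `f`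
with the constants `-‖f‖` and `‖f‖` confines its values to a product of compact intervals, which is
compact by Tychonoff's theorem. The defining identities each involve only finitely many evaluations,
so they cut out a closed subset of that product.
-/

namespace IsIdempotentProb

variable {X : Type*} [TopologicalSpace X] {μ : C(X, ℝ) → ℝ}

theorem map_const_add (hμ : IsIdempotentProb μ) (c : ℝ) (f : C(X, ℝ)) :
    μ (ContinuousMap.const X c + f) = c + μ f :=
  hμ.1 c f

theorem map_sup (hμ : IsIdempotentProb μ) (f g : C(X, ℝ)) : μ (f ⊔ g) = μ f ⊔ μ g :=
  hμ.2.1 f g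

theorem map_zero (hμ : IsIdempotentProb μ) : μ 0 = 0 :=
  hμ.2.2

theorem map_const (hμ : IsIdempotentProb μ) (c : ℝ) : μ (ContinuousMap.const X c) = c := by
  simpa only [add_zero, hμ.map_zero] using hμ.map_const_add c 0

theorem monotone (hμ : IsIdempotentProb μ) : Monotone μ :=
  .of_map_sup hμ.map_sup

theorem apply_mem_Icc (hμ : IsIdempotentProb μ) {f : C(X, ℝ)} {a b : ℝ}
    (hf : ∀ x, f x ∈ Set.Icc a b) : μ f ∈ Set.Icc a b := by
  constructor
  · calc
      a = μ (ContinuousMap.const X a) := (hμ.map_const a).symm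
      _ ≤ μ f := hμ.monotone fun x ↦ (hf x).1
  · calc
      μ f ≤ μ (ContinuousMap.const X b) := hμ.monotone fun x ↦ (hf x).2
      _ = b := hμ.map_const b

theorem apply_mem_Icc_norm [CompactSpace X] (hμ : IsIdempotentProb μ) (f : C(X, ℝ)) :
    μ f ∈ Set.Icc (-‖f‖) ‖f‖ :=
  hμ.apply_mem_Icc fun x ↦ ⟨f.neg_norm_le_apply x, f.apply_le_norm x⟩

end IsIdempotentProb

theorem isClosed_setOfPred_isIdempotentProb {X : Type*} [TopologicalSpace X] :
    IsClosed {μ : C(X, ℝ) → ℝ | IsIdempotentProb μ} := by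
  have translation : IsClosed {μ : C(X, ℝ) → ℝ |
      ∀ (c : ℝ) (f : C(X, ℝ)), μ (ContinuousMap.const X c + f) = c + μ f} := by
    simp only [Set.ofPred_forall]
    exact isClosed_iInter fun c ↦ isClosed_iInter fun f ↦ isClosed_eq (by fun_prop) (by fun_prop)
  have maxima : IsClosed {μ : C(X, ℝ) → ℝ | ∀ f g : C(X, ℝ), μ (f ⊔ g) = max (μ f) (μ g)} := by
    simp only [Set.ofPred_forall]
    exact isClosed_iInter fun f ↦ isClosed_iInter fun g ↦ isClosed_eq (by fun_prop) (by fun_prop)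
  have normalization : IsClosed {μ : C(X, ℝ) → ℝ | μ 0 = 0} :=
    isClosed_setOfPred_map_zero C(X, ℝ) ℝ
  exact translation.inter (maxima.inter normalization)

theorem idempotent_probs_isCompact_general {X : Type*} [TopologicalSpace X] [CompactSpace X] :
    IsCompact {μ : C(X, ℝ) → ℝ | IsIdempotentProb μ} := by
  have box_isCompact : IsCompact (Set.univ.pi fun f : C(X, ℝ) ↦ Set.Icc (-‖f‖) ‖f‖) :=
    isCompact_univ_pi fun _ ↦ isCompact_Icc
  exact box_isCompact.of_isClosed_subset isClosed_setOfPred_isIdempotentProb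
    fun _ hμ f _ ↦ hμ.apply_mem_Icc_norm f

theorem idempotent_probs_isCompact
    {X : Type*} [MetricSpace X] [CompactSpace X] [Nonempty X] :
    IsCompact { μ : C(X, ℝ) → ℝ | IsIdempotentProb μ } :=
  idempotent_probs_isCompact_general
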